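/- Let n ≥ 3 and let L = (l₀,…,l_{n−2}) be a weight vector in ℙⁿ. If Σ_{i=0}^{n−2} (i+1)·lᵢ ≤ n + 3, then L is feasible: a generic configuration of linear subspaces of weight L is maximally intersected by some rational normal curve. -/

import Mathlib

noncomputable section

/-- Projective space `ℙⁿ(ℂ)`, the projectivization of `ℂ^{n+1}`. -/
abbrev PP (k : ℕ) := Projectivization ℂ (Fin (k + 1) → ℂ)

/-- The vector of the monomials `s^k t^(n-k)`, used to parametrize rational normal curves. -/
def veron (n : ℕ) (v : Fin 2 → ℂ) : Fin (n + 1) → ℂ :=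
  fun k => v 0 ^ (k : ℕ) * v 1 ^ (n - (k : ℕ))

/-- `C ⊆ ℙⁿ` is a rational normal curve if it is the image of `[s:t] ↦ [F₀(s,t):⋯:Fₙ(s,t)]`
for a basis `F₀,…,Fₙ` of the degree-`n` binary forms; such a basis is encoded by an
invertible matrix of coefficients applied to the monomial vector `veron`. -/
def IsRNC (n : ℕ) (C : Set (PP n)) : Prop :=
  ∃ M : Matrix (Fin (n + 1)) (Fin (n + 1)) ℂ, IsUnit M.det ∧
    C = {P : PP n | ∃ v : Fin 2 → ℂ, v ≠ 0 ∧ ∃ c : ℂ, c ≠ 0 ∧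
      P.rep = c • M.mulVec (veron n v)}

/-- The linear subspace of `ℙⁿ` given as the projectivization of the column span of a matrix. -/
def projSet {n m : ℕ} (A : Matrix (Fin (n + 1)) (Fin m) ℂ) : Set (PP n) :=
  {P : PP n | P.rep ∈ Submodule.span ℂ (Set.range fun j => fun r => A r j)}

/-- A configuration of weight `L = (l₀,…,l_{n-2})`: for each `i`, `lᵢ` matrices of size
`(n+1) × (i+1)`, whose column spans give the `i`-dimensional components. -/
abbrev Config (n : ℕ) (L : Fin (n - 1) → ℕ) :=
  (i : Fin (n - 1)) → Fin (L i) → Matrix (Fin (n + 1)) (Fin (i.1 + 1)) ℂ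

/-- All matrices of the configuration have full rank. -/
def FullRank {n : ℕ} {L : Fin (n - 1) → ℕ} (A : Config n L) : Prop :=
  ∀ i j, (A i j).rank = i.1 + 1

/-- A curve `C` maximally intersects the configuration `A`: it meets every `i`-dimensional
component in exactly `i+1` distinct points. -/
def MaxIntersects {n : ℕ} {L : Fin (n - 1) → ℕ} (C : Set (PP n)) (A : Config n L) : Prop :=
  ∀ i j, (C ∩ projSet (A i j)).ncard = i.1 + 1

/-- A property `Q` holds for a generic configuration of weight `L`: there is a nonzero
polynomial in the matrix entries such that `Q` holds at every full-rank tuple of matrices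
where the polynomial does not vanish. -/
def GenHolds (n : ℕ) (L : Fin (n - 1) → ℕ) (Q : Config n L → Prop) : Prop :=
  ∃ F : MvPolynomial ((i : Fin (n - 1)) × (Fin (L i) × Fin (n + 1) × Fin (i.1 + 1))) ℂ,
    F ≠ 0 ∧ ∀ A : Config n L, FullRank A →
      MvPolynomial.eval (fun p => A p.1 p.2.1 p.2.2.1 p.2.2.2) F ≠ 0 → Q A

/-- `L` is feasible: a generic configuration of weight `L` is maximally intersected
by some rational normal curve. -/
def Feasible (n : ℕ) (L : Fin (n - 1) → ℕ) : Prop :=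
  GenHolds n L fun A => ∃ C : Set (PP n), IsRNC n C ∧ MaxIntersects C A

/-! Through any `n + 3` points of `ℙⁿ` in linear general position passes a rational normal curve
(Castelnuovo): in the coordinates for which the first `n + 1` points are the coordinate points,
it is the curve whose `i`-th coordinate is, up to scale, the product of all the linear forms
`[y j, v]` with `j ≠ i`, where `y j ∈ ℙ¹` is formed by the `j`-th coordinates of the two remaining
points. Since `Σ (i+1)·lᵢ ≤ n + 3`, such a curve passes through all the columns of a generic
configuration. It meets the span of at most `n` of its points only in these points, because some
form of degree `n` vanishes at the corresponding parameters but not at a given further one. -/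

section LinearGeneralPosition

open Finset

variable {K ι : Type*} [Field K] {m : ℕ}

/-- A family of vectors of `Kᵐ` is in linear general position if any `m` of them are linearly
independent. -/
def InLinearGeneralPosition (p : ι → Fin m → K) : Prop :=
  ∀ s : Fin m ↪ ι, LinearIndependent K (p ∘ s)

/-- The product of all maximal minors of a family of vectors of `Rᵐ`: as a polynomial in the
coordinates, it cuts out the families that are not in linear general position. Each minor occurs
once for every ordering of its rows. -/
def minorProd {R : Type*} [CommRing R] [Fintype ι] [DecidableEq ι] (p : ι → Fin m → R) : R :=
  ∏ s : Fin m ↪ ι, (Matrix.of (p ∘ s)).det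

lemma map_minorProd {R S : Type*} [CommRing R] [CommRing S] [Fintype ι] [DecidableEq ι]
    (f : R →+* S) (p : ι → Fin m → R) :
    f (minorProd p) = minorProd fun k r => f (p k r) := by
  simp only [minorProd, map_prod, RingHom.map_det]
  rfl

lemma minorProd_ne_zero_iff [Fintype ι] [DecidableEq ι] {p : ι → Fin m → K} :
    minorProd p ≠ 0 ↔ InLinearGeneralPosition p := by
  rw [minorProd, prod_ne_zero_iff]
  refine ⟨fun h s => ?_, fun h s _ => ?_⟩
  · exact Matrix.linearIndependent_rows_of_det_ne_zero (h s (mem_univ s))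
  · exact ((Matrix.isUnit_iff_isUnit_det _).1
      (Matrix.linearIndependent_rows_iff_isUnit.1 (h s))).ne_zero

lemma inLinearGeneralPosition_pow {f : ι → K} (hf : Function.Injective f) :
    InLinearGeneralPosition fun k (r : Fin m) => f k ^ (r : ℕ) := fun s =>
  Matrix.linearIndependent_rows_of_det_ne_zero
    (Matrix.det_vandermonde_ne_zero_iff.2 (hf.comp s.injective))

lemma InLinearGeneralPosition.card_lt_of_forall_eq_zero {p : ι → Fin m → K}
    (hp : InLinearGeneralPosition p) {φ : Module.Dual K (Fin m → K)} (hφ : φ ≠ 0)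
    {s : Finset ι} (hs : ∀ k ∈ s, φ (p k) = 0) : #s < m := by
  by_contra! hms
  obtain ⟨e⟩ : Nonempty (Fin m ↪ s) := Function.Embedding.nonempty_of_card_le (by simpa)
  have hspan := (hp (e.trans (.subtype _))).span_eq_top_of_card_eq_finrank' (by simp)
  exact hφ (LinearMap.ext_on_range hspan fun i => hs _ (e i).2)

/-- The bracket of two vectors of the plane, which over a field vanishes iff they are
proportional. It serves as the linear form in `z` whose zero on the projective line is `[y]`. -/
def bracket {R : Type*} [CommRing R] (y z : Fin 2 → R) : R :=
  y 0 * z 1 - y 1 * z 0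

lemma bracket_self {R : Type*} [CommRing R] (y : Fin 2 → R) : bracket y y = 0 := by
  rw [bracket, mul_comm, sub_self]

lemma bracket_single_zero {R : Type*} [CommRing R] (y : Fin 2 → R) :
    bracket y (Pi.single 0 1) = -y 1 := by
  simp [bracket]

lemma bracket_single_one {R : Type*} [CommRing R] (y : Fin 2 → R) :
    bracket y (Pi.single 1 1) = y 0 := by
  simp [bracket]

lemma exists_smul_eq_of_bracket_eq_zero {y z : Fin 2 → K} (hy : y ≠ 0) (h : bracket y z = 0) :
    ∃ a : K, a • y = z := by
  by_contra! hyz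
  have hli := (LinearIndependent.pair_iff' hy).2 hyz
  have hdet := (Matrix.isUnit_iff_isUnit_det _).1
    ((Matrix.linearIndependent_rows_iff_isUnit (A := Matrix.of ![y, z])).1 hli)
  exact hdet.ne_zero ((Matrix.det_fin_two _).trans h)

lemma exists_bracket_ne_zero {v : Fin 2 → K} (hv : v ≠ 0) : ∃ z, bracket z v ≠ 0 := by
  obtain ⟨a, ha⟩ := Function.ne_iff.1 hv
  fin_cases a
  · exact ⟨![0, 1], by simpa [bracket] using ha⟩
  · exact ⟨![1, 0], by simpa [bracket] using ha⟩

namespace InLinearGeneralPosition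

variable {p : Fin m ⊕ Fin 2 → Fin m → K} {b : Module.Basis (Fin m) K (Fin m → K)}

lemma coord_ne_zero (hp : InLinearGeneralPosition p) (hb : ∀ i, b i = p (.inl i)) (i : Fin m)
    (a : Fin 2) : b.coord i (p (.inr a)) ≠ 0 := by
  intro h
  have hne : b.coord i ≠ 0 := fun h0 => by simpa using LinearMap.congr_fun h0 (b i)
  have hlt := hp.card_lt_of_forall_eq_zero (s := (univ.erase i).disjSum {a}) hne (by
    rintro (j | c) hk
    · have hji : j ≠ i := by simpa using hk
      simp [← hb, hji]
    · obtain rfl : c = a := by simpa using hk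
      exact h)
  rw [card_disjSum, card_erase_of_mem (mem_univ i), card_fin, card_singleton] at hlt
  omega

/-- If the bracket vanished, then `y i 0 • b.coord j - y j 0 • b.coord i` would define a
hyperplane through both extra points and through all the basis points except `b i` and `b j`. -/
lemma bracket_coord_ne_zero (hp : InLinearGeneralPosition p) (hb : ∀ i, b i = p (.inl i))
    {i j : Fin m} (hij : i ≠ j) :
    bracket (fun a => b.coord i (p (.inr a))) (fun a => b.coord j (p (.inr a))) ≠ 0 := by
  intro h
  let y (l : Fin m) (a : Fin 2) : K := b.coord l (p (.inr a))
  let ψ : Module.Dual K (Fin m → K) := y i 0 • b.coord j - y j 0 • b.coord i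
  have hψ : ψ ≠ 0 := fun h0 => by
    have hψj : ψ (b j) = y i 0 := by simp [ψ, hij]
    exact hp.coord_ne_zero hb i 0 (hψj.symm.trans (LinearMap.congr_fun h0 (b j)))
  have hψinr : ∀ a : Fin 2, ψ (p (.inr a)) = 0 := Fin.forall_fin_two.2
    ⟨sub_eq_zero.2 (mul_comm (y i 0) (y j 0)),
      (congrArg (y i 0 * y j 1 - ·) (mul_comm (y j 0) (y i 1))).trans h⟩
  have hlt := hp.card_lt_of_forall_eq_zero (s := ((univ.erase i).erase j).disjSum univ) hψ (by
    rintro (l | a) hk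
    · obtain ⟨hlj, hli⟩ : l ≠ j ∧ l ≠ i := by simpa using hk
      simp [ψ, ← hb, hlj, hli]
    · exact hψinr a)
  rw [card_disjSum, card_erase_of_mem (by simpa using hij.symm),
    card_erase_of_mem (mem_univ i), card_fin, card_fin] at hlt
  omega

end InLinearGeneralPosition

end LinearGeneralPosition

section RationalNormalCurves

open Finset MvPolynomial

variable {n : ℕ} {κ : Type*}

lemma veron_smul (a : ℂ) (v : Fin 2 → ℂ) : veron n (a • v) = a ^ n • veron n v := by
  ext k
  have hpow : a ^ n = a ^ (k : ℕ) * a ^ (n - k : ℕ) := by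
    rw [← pow_add, Nat.add_sub_of_le (Nat.lt_succ_iff.1 k.2)]
  simp only [veron, Pi.smul_apply, smul_eq_mul, mul_pow, hpow]
  ring

lemma exists_dual_veron_eq_eval {F : MvPolynomial (Fin 2) ℂ} (hF : F.IsHomogeneous n) :
    ∃ φ : Module.Dual ℂ (Fin (n + 1) → ℂ), ∀ v, φ (veron n v) = eval v F := by
  refine ⟨∑ d ∈ F.support, coeff d F • LinearMap.proj (Fin.ofNat (n + 1) (d 0)), fun v => ?_⟩
  rw [eval_eq', LinearMap.sum_apply]
  refine sum_congr rfl fun d hd => ?_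
  have hdeg : d 0 + d 1 = n := by
    simpa [Finsupp.weight_apply, Finsupp.sum_fintype] using hF (mem_support_iff.1 hd)
  have hd0 : d 0 % (n + 1) = d 0 := Nat.mod_eq_of_lt (by omega)
  have hd1 : n - d 0 = d 1 := by omega
  simp [veron, hd0, hd1]

lemma exists_dual_veron_eq_prod_bracket (y : κ → Fin 2 → ℂ) {s : Finset κ} (hs : #s = n) :
    ∃ φ : Module.Dual ℂ (Fin (n + 1) → ℂ), ∀ v, φ (veron n v) = ∏ k ∈ s, bracket (y k) v := by
  let ℓ (k : κ) : MvPolynomial (Fin 2) ℂ := C (y k 0) * X 1 - C (y k 1) * X 0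
  have hℓ : (∏ k ∈ s, ℓ k).IsHomogeneous n := by
    simpa [hs] using IsHomogeneous.prod s ℓ (fun _ => 1) fun k _ =>
      (isHomogeneous_C_mul_X _ _).sub (isHomogeneous_C_mul_X _ _)
  obtain ⟨φ, hφ⟩ := exists_dual_veron_eq_eval hℓ
  exact ⟨φ, fun v => by simp [hφ, ℓ, bracket]⟩

/-- Otherwise the product of the linear forms vanishing at the `y k`, padded to degree `n` by a
linear form not vanishing at `v`, would separate `veron n v` from the span. -/
lemma exists_bracket_eq_zero_of_veron_mem_span [Fintype κ] (hκ : Fintype.card κ ≤ n)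
    {y : κ → Fin 2 → ℂ} {v : Fin 2 → ℂ} (hv : v ≠ 0)
    (hmem : veron n v ∈ Submodule.span ℂ (Set.range fun k => veron n (y k))) :
    ∃ k, bracket (y k) v = 0 := by
  by_contra! hne
  obtain ⟨z, hz⟩ := exists_bracket_ne_zero hv
  obtain ⟨φ, hφ⟩ := exists_dual_veron_eq_prod_bracket (n := n)
    (Sum.elim y fun _ => z) (s := univ.disjSum (range (n - Fintype.card κ)))
    (by rw [card_disjSum, card_univ, card_range]; omega)
  simp only [prod_disjSum, Sum.elim_inl, Sum.elim_inr] at hφ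
  have hspan : Submodule.span ℂ (Set.range fun k => veron n (y k)) ≤ LinearMap.ker φ := by
    rw [Submodule.span_le]
    rintro _ ⟨k, rfl⟩
    rw [SetLike.mem_coe, LinearMap.mem_ker, hφ, prod_eq_zero (mem_univ k) (bracket_self _),
      zero_mul]
  have hφv : φ (veron n v) ≠ 0 := by
    rw [hφ]
    exact mul_ne_zero (prod_ne_zero_iff.2 fun k _ => hne k) (prod_ne_zero_iff.2 fun _ _ => hz)
  exact hφv (hspan hmem)

/-- The affine cone, without its apex, over the image of `[v] ↦ [M *ᵥ veron n v]`; this image is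
a rational normal curve when `M` is invertible. -/
def rncCone (M : Matrix (Fin (n + 1)) (Fin (n + 1)) ℂ) : Set (Fin (n + 1) → ℂ) :=
  {x | ∃ v : Fin 2 → ℂ, v ≠ 0 ∧ ∃ c : ℂ, c ≠ 0 ∧ x = c • M.mulVec (veron n v)}

/-- The projectivization of `rncCone M`, in the form used by `IsRNC`. -/
def rnc (M : Matrix (Fin (n + 1)) (Fin (n + 1)) ℂ) : Set (PP n) :=
  {P | P.rep ∈ rncCone M}

variable {M : Matrix (Fin (n + 1)) (Fin (n + 1)) ℂ}

lemma isRNC_rnc (hM : IsUnit M.det) : IsRNC n (rnc M) :=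
  ⟨M, hM, rfl⟩

lemma smul_mem_rncCone {a : ℂ} (ha : a ≠ 0) {x : Fin (n + 1) → ℂ} (hx : x ∈ rncCone M) :
    a • x ∈ rncCone M := by
  obtain ⟨v, hv, c, hc, rfl⟩ := hx
  exact ⟨v, hv, a * c, mul_ne_zero ha hc, smul_smul a c _⟩

lemma exists_smul_eq_of_mem_rncCone_of_mem_span [Fintype κ] (hκ : Fintype.card κ ≤ n)
    (hM : IsUnit M.det) {x : κ → Fin (n + 1) → ℂ} (hx : ∀ k, x k ∈ rncCone M)
    {z : Fin (n + 1) → ℂ} (hz : z ∈ rncCone M) (hmem : z ∈ Submodule.span ℂ (Set.range x)) :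
    ∃ k, ∃ a : ℂ, a • x k = z := by
  choose y hy d hd hxy using hx
  obtain ⟨v, hv, c, hc, rfl⟩ := hz
  have hle : Submodule.span ℂ (Set.range x) ≤
      (Submodule.span ℂ (Set.range fun k => veron n (y k))).map M.mulVecLin := by
    rw [Submodule.span_le]
    rintro _ ⟨k, rfl⟩
    rw [hxy k]
    exact Submodule.smul_mem _ _ ⟨_, Submodule.subset_span ⟨k, rfl⟩, rfl⟩
  obtain ⟨w, hw, hwv⟩ := hle ((Submodule.smul_mem_iff _ hc).1 hmem)
  obtain rfl : w = veron n v :=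
    Matrix.mulVec_injective_of_isUnit ((Matrix.isUnit_iff_isUnit_det M).2 hM) hwv
  obtain ⟨k, hk⟩ := exists_bracket_eq_zero_of_veron_mem_span hκ hv hw
  obtain ⟨a, rfl⟩ := exists_smul_eq_of_bracket_eq_zero (hy k) hk
  refine ⟨k, c * a ^ n * (d k)⁻¹, ?_⟩
  rw [hxy k, veron_smul, Matrix.mulVec_smul, mul_smul, inv_smul_smul₀ (hd k), mul_smul]

theorem ncard_rnc_inter_projSet {m : ℕ} (hm : m ≤ n) (hM : IsUnit M.det)
    {A : Matrix (Fin (n + 1)) (Fin m) ℂ} (hA : LinearIndependent ℂ A.col)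
    (hcol : ∀ k, A.col k ∈ rncCone M) : (rnc M ∩ projSet A).ncard = m := by
  let f (k : Fin m) : PP n := Projectivization.mk ℂ (A.col k) (hA.ne_zero k)
  have hf : Function.Injective f :=
    (Projectivization.independent_iff.1 (.mk A.col hA.ne_zero hA)).injective.of_comp
  have hrange : rnc M ∩ projSet A = Set.range f := by
    ext P
    constructor
    · rintro ⟨hP, hPA⟩
      obtain ⟨k, hk⟩ := exists_smul_eq_of_mem_rncCone_of_mem_span (by simpa) hM hcol hP hPA
      exact ⟨k, by rwa [← P.mk_rep, eq_comm, Projectivization.mk_eq_mk_iff']⟩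
    · rintro ⟨k, rfl⟩
      obtain ⟨a, ha⟩ := Projectivization.exists_smul_eq_mk_rep ℂ (A.col k) (hA.ne_zero k)
      have hrep : (f k).rep = (a : ℂ) • A.col k := ha.symm
      rw [rnc, projSet, Set.mem_inter_iff, Set.mem_ofPred_eq, Set.mem_ofPred_eq, hrep]
      exact ⟨smul_mem_rncCone a.ne_zero (hcol k),
        Submodule.smul_mem _ _ (Submodule.subset_span ⟨k, rfl⟩)⟩
  rw [hrange, ← Set.image_univ, Set.ncard_image_of_injective _ hf, Set.ncard_univ, Nat.card_fin]

/-- The `i`-th coordinate of the curve is the form `y i 0 * y i 1 * ∏_{j ≠ i} [y j, v]`. -/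
lemma exists_linearMap_veron {y : Fin (n + 1) → Fin 2 → ℂ} (hy : ∀ i a, y i a ≠ 0)
    (hyy : Pairwise fun i j => bracket (y i) (y j) ≠ 0) :
    ∃ T : (Fin (n + 1) → ℂ) →ₗ[ℂ] (Fin (n + 1) → ℂ),
      (∀ i, ∃ d : ℂ, d ≠ 0 ∧ T (veron n (y i)) = d • Pi.single i 1) ∧
      ∀ a, ∃ d : ℂ, d ≠ 0 ∧ T (veron n (Pi.single a 1)) = d • fun i => y i a := by
  choose φ hφ using fun i : Fin (n + 1) =>
    exists_dual_veron_eq_prod_bracket (n := n) y (s := univ.erase i) (by simp)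
  let T : (Fin (n + 1) → ℂ) →ₗ[ℂ] (Fin (n + 1) → ℂ) :=
    LinearMap.pi fun i => (y i 0 * y i 1) • φ i
  have hT (v i) : T (veron n v) i = y i 0 * y i 1 * ∏ j ∈ univ.erase i, bracket (y j) v :=
    congrArg (y i 0 * y i 1 * ·) (hφ i v)
  have hprod (a : Fin 2) : ∏ j, y j a ≠ 0 := prod_ne_zero_iff.2 fun j _ => hy j a
  refine ⟨T, fun i => ⟨T (veron n (y i)) i, ?_, ?_⟩, Fin.forall_fin_two.2
    ⟨⟨(-1) ^ n * ∏ j, y j 1, mul_ne_zero (by simp) (hprod 1), funext fun i => ?_⟩,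
      ⟨∏ j, y j 0, hprod 0, funext fun i => ?_⟩⟩⟩
  · rw [hT]
    exact mul_ne_zero (mul_ne_zero (hy i 0) (hy i 1))
      (prod_ne_zero_iff.2 fun j hj => hyy (ne_of_mem_erase hj))
  · ext r
    obtain rfl | hri := eq_or_ne r i
    · simp
    · rw [hT, prod_eq_zero (mem_erase.2 ⟨hri.symm, mem_univ i⟩) (bracket_self _)]
      simp [hri]
  · simp only [hT, bracket_single_zero, prod_neg, card_erase_of_mem (mem_univ i), card_fin,
      Nat.add_sub_cancel, Pi.smul_apply, smul_eq_mul, ← mul_prod_erase univ (y · 1) (mem_univ i)]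
    ring
  · simp only [hT, bracket_single_one, Pi.smul_apply, smul_eq_mul,
      ← mul_prod_erase univ (y · 0) (mem_univ i)]
    ring

theorem InLinearGeneralPosition.exists_forall_mem_rncCone
    {p : Fin (n + 1) ⊕ Fin 2 → Fin (n + 1) → ℂ} (hp : InLinearGeneralPosition p) :
    ∃ M : Matrix (Fin (n + 1)) (Fin (n + 1)) ℂ, IsUnit M.det ∧ ∀ k, p k ∈ rncCone M := by
  let b := basisOfLinearIndependentOfCardEqFinrank (hp .inl) (by simp)
  have hb (i) : b i = p (.inl i) := by simp [b]
  let y (i : Fin (n + 1)) (a : Fin 2) : ℂ := b.coord i (p (.inr a))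
  have hy (i a) : y i a ≠ 0 := hp.coord_ne_zero hb i a
  obtain ⟨T, hTbase, hTextra⟩ := exists_linearMap_veron hy
    fun i j hij => hp.bracket_coord_ne_zero hb hij
  let S := b.equivFun.symm.toLinearMap ∘ₗ T
  have hS (k) : ∃ v : Fin 2 → ℂ, v ≠ 0 ∧ ∃ d : ℂ, d ≠ 0 ∧ S (veron n v) = d • p k := by
    rcases k with i | a
    · obtain ⟨d, hd, hTi⟩ := hTbase i
      exact ⟨y i, fun h => hy i 0 (congrFun h 0), d, hd, by simp [S, hTi, ← hb]⟩
    · obtain ⟨d, hd, hTa⟩ := hTextra a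
      have hsymm : b.equivFun.symm (fun i => y i a) = p (.inr a) :=
        b.equivFun.symm_apply_apply _
      exact ⟨Pi.single a 1, by simp, d, hd, by simp [S, hTa, hsymm]⟩
  have hSsurj : LinearMap.range S = ⊤ := by
    rw [eq_top_iff, ← b.span_eq, Submodule.span_le]
    rintro _ ⟨i, rfl⟩
    obtain ⟨v, -, d, hd, hv⟩ := hS (.inl i)
    rw [SetLike.mem_coe, hb, ← Submodule.smul_mem_iff _ hd, ← hv]
    exact LinearMap.mem_range_self S _
  have hSunit : IsUnit S.toMatrix' :=
    LinearMap.isUnit_toMatrix'_iff.2 ((LinearMap.isUnit_iff_range_eq_top S).2 hSsurj)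
  refine ⟨S.toMatrix', (Matrix.isUnit_iff_isUnit_det _).1 hSunit, fun k => ?_⟩
  obtain ⟨v, hv, d, hd, hSv⟩ := hS k
  refine ⟨v, hv, d⁻¹, inv_ne_zero hd, ?_⟩
  rw [LinearMap.toMatrix'_mulVec, hSv, inv_smul_smul₀ hd]

end RationalNormalCurves

section Configurations

open MvPolynomial

variable {n : ℕ} {L : Fin (n - 1) → ℕ}

lemma GenHolds.mono {Q Q' : Config n L → Prop} (hQ : GenHolds n L Q)
    (h : ∀ A, FullRank A → Q A → Q' A) : GenHolds n L Q' := by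
  obtain ⟨F, hF, hFQ⟩ := hQ
  exact ⟨F, hF, fun A hA hFA => h A hA (hFQ A hA hFA)⟩

lemma FullRank.linearIndependent_col {A : Config n L} (hA : FullRank A) (i : Fin (n - 1))
    (j : Fin (L i)) : LinearIndependent ℂ (A i j).col := by
  rw [linearIndependent_iff_card_eq_finrank_span, Set.finrank, ← Matrix.rank_eq_finrank_span_cols,
    hA i j, Fintype.card_fin]

/-- The index set of all the columns of all the matrices of a configuration of weight `L`. -/
abbrev ColumnIndex (L : Fin (n - 1) → ℕ) :=
  (i : Fin (n - 1)) × (Fin (L i) × Fin (i.1 + 1))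

lemma card_columnIndex : Fintype.card (ColumnIndex L) = ∑ i : Fin (n - 1), (i.1 + 1) * L i := by
  simp [mul_comm]

/-- All the columns of a configuration, as a single family of vectors. -/
def column (A : Config n L) (s : ColumnIndex L) : Fin (n + 1) → ℂ :=
  (A s.1 s.2.1).col s.2.2

lemma genHolds_inLinearGeneralPosition_extend {ι : Type*} [Finite ι] (e : ColumnIndex L ↪ ι)
    {q : ι → Fin (n + 1) → ℂ} (hq : InLinearGeneralPosition q) :
    GenHolds n L fun A => InLinearGeneralPosition (Function.extend e (column A) q) := by
  classical
  have := Fintype.ofFinite ι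
  let P : ι → Fin (n + 1) → MvPolynomial
      ((i : Fin (n - 1)) × (Fin (L i) × Fin (n + 1) × Fin (i.1 + 1))) ℂ :=
    Function.extend e (fun s r => X ⟨s.1, s.2.1, r, s.2.2⟩) fun k r => C (q k r)
  have heval (A : Config n L) : eval (fun t => A t.1 t.2.1 t.2.2.1 t.2.2.2) (minorProd P) =
      minorProd (Function.extend e (column A) q) := by
    rw [map_minorProd]
    congr 1
    funext k r
    by_cases hk : ∃ s, e s = k
    · obtain ⟨s, rfl⟩ := hk
      simp [P, e.injective.extend_apply, column]
    · simp [P, Function.extend_apply' _ _ _ hk]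
  refine ⟨minorProd P, fun h0 => ?_, fun A _ hA => ?_⟩
  · let A₀ : Config n L := fun i j r c => q (e ⟨i, j, c⟩) r
    have hA₀ : Function.extend e (column A₀) q = q := by
      funext k
      by_cases hk : ∃ s, e s = k
      · obtain ⟨s, rfl⟩ := hk
        exact e.injective.extend_apply _ _ s
      · exact Function.extend_apply' _ _ _ hk
    refine minorProd_ne_zero_iff.2 hq ?_
    rw [← hA₀, ← heval A₀, h0, map_zero]
  · rwa [heval, minorProd_ne_zero_iff] at hA

end Configurations

/-- If `Σ (i+1)·lᵢ ≤ n+3` then `L` is feasible. -/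
theorem feasibility_numerical (n : ℕ) (hn : 3 ≤ n) (L : Fin (n - 1) → ℕ)
    (h : ∑ i : Fin (n - 1), (i.1 + 1) * L i ≤ n + 3) :
    Feasible n L := by
  obtain ⟨e⟩ : Nonempty (ColumnIndex L ↪ Fin (n + 1) ⊕ Fin 2) :=
    Function.Embedding.nonempty_of_card_le <| by
      simpa only [card_columnIndex, Fintype.card_sum, Fintype.card_fin] using h
  obtain ⟨f⟩ := nonempty_embedding_nat (Fin (n + 1) ⊕ Fin 2)
  have hq : InLinearGeneralPosition fun k (r : Fin (n + 1)) => (f k : ℂ) ^ (r : ℕ) :=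
    inLinearGeneralPosition_pow (Nat.cast_injective.comp f.injective)
  refine (genHolds_inLinearGeneralPosition_extend e hq).mono fun A hA hgp => ?_
  obtain ⟨M, hM, hcurve⟩ := hgp.exists_forall_mem_rncCone
  refine ⟨rnc M, isRNC_rnc hM, fun i j => ?_⟩
  refine ncard_rnc_inter_projSet (by omega) hM (hA.linearIndependent_col i j) fun k => ?_
  have hk := hcurve (e ⟨i, j, k⟩)
  rwa [e.injective.extend_apply] at hk

end
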